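/- On ℝ² with a smooth Riemannian metric g, let k̃(x, u, w) = √(det g(x))·ε_{ij}uⁱwʲ/‖u‖³ (u ≠ 0) be the signed Frenet curvature in covariant coordinates. Then for every (x, u, w) with u ≠ 0 the covariant momenta satisfy π⁽¹⁾ᵢ := ∂k̃/∂wⁱ = −√(det g(x))·ε_{ij}uʲ/‖u‖³; moreover, along any smooth curve x : ℝ → ℝ² with x'(t) ≠ 0, writing u(t) = x'(t) and w(t)ⁱ = x''ⁱ + Γⁱ_{lj}x'ˡx'ʲ, the momentum πᵢ(t) := (∂k̃/∂uⁱ)(x,u,w) − (π⁽¹⁾)'ᵢ(t) (with ' the covariant derivative of covectors along the curve) equals πᵢ(t) = −√(det g(x(t)))·ε_{ij}w(t)ʲ/‖u(t)‖³. -/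

import Mathlib

noncomputable section
open scoped BigOperators

/-- The partial derivative `∂f/∂xˡ` of a scalar function on `ℝⁿ`. -/
def pd {n : ℕ} (f : (Fin n → ℝ) → ℝ) (l : Fin n) (x : Fin n → ℝ) : ℝ :=
  fderiv ℝ f x (Pi.single l 1)

/-- The Christoffel symbols `Γⁱ_{lj} = ½g^{ik}(∂_l g_{kj} + ∂_j g_{kl} − ∂_k g_{lj})`
of a metric `g` with inverse `ginv`. -/
def christoffel {n : ℕ} (g ginv : (Fin n → ℝ) → Fin n → Fin n → ℝ)
    (i l j : Fin n) (x : Fin n → ℝ) : ℝ :=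
  (1 / 2) * ∑ k, ginv x i k *
    (pd (fun y => g y k j) l x + pd (fun y => g y k l) j x - pd (fun y => g y l j) k x)

/-- The covariant acceleration `wⁱ = u̇ⁱ + Γⁱ_{lj}(x)uˡuʲ`. -/
def covAccel {n : ℕ} (g ginv : (Fin n → ℝ) → Fin n → Fin n → ℝ)
    (x u v : Fin n → ℝ) (i : Fin n) : ℝ :=
  v i + ∑ l, ∑ j, christoffel g ginv i l j x * u l * u j

/-- The Riemannian norm `‖u‖ = (g_{ij}(x)uⁱuʲ)^{1/2}`. -/
def gnorm {n : ℕ} (g : (Fin n → ℝ) → Fin n → Fin n → ℝ) (x u : Fin n → ℝ) : ℝ :=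
  Real.sqrt (∑ i, ∑ j, g x i j * u i * u j)

/-- The second jet `j²x(t) = (x(t), x'(t), x''(t))` of a curve. -/
def jet2 {n : ℕ} (x : ℝ → Fin n → ℝ) (t : ℝ) :
    (Fin n → ℝ) × (Fin n → ℝ) × (Fin n → ℝ) :=
  (x t, deriv x t, deriv (deriv x) t)

/-- The covariant second jet `(x(t), x'(t), w(t))` of a curve,
`w(t)ⁱ = x''ⁱ + Γⁱ_{lj}x'ˡx'ʲ`. -/
def jet2Cov {n : ℕ} (g ginv : (Fin n → ℝ) → Fin n → Fin n → ℝ)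
    (x : ℝ → Fin n → ℝ) (t : ℝ) :
    (Fin n → ℝ) × (Fin n → ℝ) × (Fin n → ℝ) :=
  (x t, deriv x t, fun i => covAccel g ginv (x t) (deriv x t) (deriv (deriv x) t) i)

/-- The `l`-th component of the Euler–Poisson expression
`∂L/∂xˡ − (d/dt)(∂L/∂uˡ) + (d²/dt²)(∂L/∂u̇ˡ)` of a second-order Lagrangian
`L(x,u,u̇)` along the curve `x`. -/
def eulerPoisson {n : ℕ} (L : (Fin n → ℝ) × (Fin n → ℝ) × (Fin n → ℝ) → ℝ)
    (x : ℝ → Fin n → ℝ) (l : Fin n) (t : ℝ) : ℝ :=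
  fderiv ℝ L (jet2 x t) (Pi.single l 1, 0, 0)
    - deriv (fun s => fderiv ℝ L (jet2 x s) (0, Pi.single l 1, 0)) t
    + deriv (deriv (fun s => fderiv ℝ L (jet2 x s) (0, 0, Pi.single l 1))) t

/-- The covariant derivative along the curve `x` of a covector field `α` given along
the curve: `(α)'ᵢ = dαᵢ/dt − Γʲ_{li}x'ˡαⱼ`. -/
def covDeriv {n : ℕ} (g ginv : (Fin n → ℝ) → Fin n → Fin n → ℝ)
    (x : ℝ → Fin n → ℝ) (α : ℝ → Fin n → ℝ) (t : ℝ) (i : Fin n) : ℝ :=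
  deriv (fun s => α s i) t
    - ∑ j, ∑ l, christoffel g ginv j l i (x t) * deriv x t l * α t j

/-- The determinant of a metric on `ℝ²`. -/
def detg (g : (Fin 2 → ℝ) → Fin 2 → Fin 2 → ℝ) (x : Fin 2 → ℝ) : ℝ :=
  g x 0 0 * g x 1 1 - g x 0 1 * g x 1 0

/-- The covector `(εb)ᵢ = ε_{ij}bʲ` with `ε₁₂ = 1` (indices in `{0,1}`). -/
def epsRow (i : Fin 2) (b : Fin 2 → ℝ) : ℝ := if i = 0 then b 1 else -b 0

/-- The signed Frenet curvature `k(x,u,u̇) = √(det g)·ε_{ij}uⁱwʲ/‖u‖³` on `ℝ²`,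
where `wⁱ = u̇ⁱ + Γⁱ_{lj}uˡuʲ`. -/
def frenetK (g ginv : (Fin 2 → ℝ) → Fin 2 → Fin 2 → ℝ)
    (q : (Fin 2 → ℝ) × (Fin 2 → ℝ) × (Fin 2 → ℝ)) : ℝ :=
  Real.sqrt (detg g q.1) *
      (q.2.1 0 * covAccel g ginv q.1 q.2.1 q.2.2 1
        - q.2.1 1 * covAccel g ginv q.1 q.2.1 q.2.2 0)
    / gnorm g q.1 q.2.1 ^ 3

/-- The signed Frenet curvature in the covariant coordinates `(x, u, w)`:
`k̃(x,u,w) = √(det g)·ε_{ij}uⁱwʲ/‖u‖³`. -/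
def frenetKCov (g : (Fin 2 → ℝ) → Fin 2 → Fin 2 → ℝ)
    (q : (Fin 2 → ℝ) × (Fin 2 → ℝ) × (Fin 2 → ℝ)) : ℝ :=
  Real.sqrt (detg g q.1) * (q.2.1 0 * q.2.2 1 - q.2.1 1 * q.2.2 0)
    / gnorm g q.1 q.2.1 ^ 3

/-!
The metric and the area form `A(a, b) = √(det g)·ε_{ij}aⁱbʲ` are parallel: along a curve with
connection matrix `ω`, metric compatibility reads `G' = G ω + ωᵀ G`, whence
`(√det G)' = √det G tr ω`. In these terms `k̃ = A(u, w)/‖u‖³`, and `∂k̃/∂u` evaluated on `v` is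
`A(v, w)/‖u‖³ − 3 A(u, w) g(u, v)/‖u‖⁵`. As `π⁽¹⁾(v) = A(u, v)/‖u‖³` and `Du/dt = w`, the
covariant derivative of `π⁽¹⁾` evaluated on `v` is `A(w, v)/‖u‖³ − 3 A(u, v) g(u, w)/‖u‖⁵`. In
dimension two the identity `g(u, u) A(v, w) = g(u, v) A(u, w) − g(u, w) A(u, v)` turns the
difference of the two into `−A(v, w)/‖u‖³`.
-/

section LeviCivita

open scoped Matrix

variable {n : ℕ} {g ginv : (Fin n → ℝ) → Fin n → Fin n → ℝ}

/-- The value `g_{ij}(x)aⁱbʲ` of the metric on a pair of tangent vectors at `x`. -/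
def metricForm (g : (Fin n → ℝ) → Fin n → Fin n → ℝ) (x a b : Fin n → ℝ) : ℝ :=
  ∑ i, ∑ j, g x i j * a i * b j

/-- The matrix `ωⁱⱼ = Γⁱ_{lj}(x)vˡ` of the Levi-Civita connection in the direction `v`: the
covariant derivative of a vector field `V` along a curve with velocity `v` is `V' + ω *ᵥ V`. -/
def connectionMatrix (g ginv : (Fin n → ℝ) → Fin n → Fin n → ℝ) (x v : Fin n → ℝ) :
    Matrix (Fin n) (Fin n) ℝ :=
  Matrix.of fun i j => ∑ l, christoffel g ginv i l j x * v l

lemma metricForm_eq_dotProduct (x a b : Fin n → ℝ) :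
    metricForm g x a b = a ⬝ᵥ (Matrix.of (g x) *ᵥ b) := by
  simp only [metricForm, dotProduct, Matrix.mulVec, Matrix.of_apply, Finset.mul_sum]
  exact Finset.sum_congr rfl fun i _ => Finset.sum_congr rfl fun j _ => by ring

lemma metricForm_comm {x : Fin n → ℝ} (hsymm : ∀ i j, g x i j = g x j i) (a b : Fin n → ℝ) :
    metricForm g x a b = metricForm g x b a := by
  unfold metricForm
  rw [Finset.sum_comm]
  exact Finset.sum_congr rfl fun i _ => Finset.sum_congr rfl fun j _ => by rw [hsymm j i]; ring

lemma covAccel_eq_add_mulVec (x u v : Fin n → ℝ) :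
    covAccel g ginv x u v = v + connectionMatrix g ginv x u *ᵥ u := by
  ext i
  simp only [covAccel, connectionMatrix, Pi.add_apply, Matrix.mulVec, dotProduct, Matrix.of_apply,
    Finset.sum_mul]
  rw [Finset.sum_comm]

lemma covDeriv_eq_sub_vecMul (x : ℝ → Fin n → ℝ) (α : ℝ → Fin n → ℝ) (t : ℝ) (i : Fin n) :
    covDeriv g ginv x α t i =
      deriv (fun s => α s i) t - (α t ᵥ* connectionMatrix g ginv (x t) (deriv x t)) i := by
  simp only [covDeriv, connectionMatrix, Matrix.vecMul, dotProduct, Matrix.of_apply,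
    Finset.sum_mul, mul_comm (α t _)]

lemma covDeriv_congr {x α β : ℝ → Fin n → ℝ} {t : ℝ} (h : α =ᶠ[nhds t] β) (i : Fin n) :
    covDeriv g ginv x α t i = covDeriv g ginv x β t i := by
  have hi : (fun s => α s i) =ᶠ[nhds t] fun s => β s i := h.mono fun s hs => congrFun hs i
  simp only [covDeriv, hi.deriv_eq, h.eq_of_nhds]

lemma covDeriv_div {x α : ℝ → Fin n → ℝ} {f : ℝ → ℝ} {f' t : ℝ} {i : Fin n}
    (hα : DifferentiableAt ℝ (fun s => α s i) t) (hf : HasDerivAt f f' t) (h0 : f t ≠ 0) :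
    covDeriv g ginv x (fun s j => α s j / f s) t i =
      covDeriv g ginv x α t i / f t - α t i * f' / f t ^ 2 := by
  have hsmul : (fun j => α t j / f t) = (f t)⁻¹ • α t := by
    ext j
    simp only [Pi.smul_apply, smul_eq_mul, div_eq_inv_mul]
  simp only [covDeriv_eq_sub_vecMul, (hα.hasDerivAt.fun_div hf h0).deriv, hsmul,
    Matrix.smul_vecMul, Pi.smul_apply, smul_eq_mul]
  field_simp
  ring

lemma fderiv_apply_eq_sum_pd (f : (Fin n → ℝ) → ℝ) (x v : Fin n → ℝ) :
    fderiv ℝ f x v = ∑ l, pd f l x * v l := by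
  conv_lhs => rw [pi_eq_sum_univ' v]
  simp only [map_sum, map_smul, smul_eq_mul, pd, mul_comm (v _)]

lemma sum_metric_mul_christoffel {x : Fin n → ℝ}
    (hinv : ∀ i j, ∑ k, ginv x i k * g x k j = if i = j then (1 : ℝ) else 0) (k l j : Fin n) :
    ∑ m, g x k m * christoffel g ginv m l j x =
      (1 / 2) *
        (pd (fun y => g y k j) l x + pd (fun y => g y k l) j x - pd (fun y => g y l j) k x) := by
  have hleft : Matrix.of (ginv x) * Matrix.of (g x) = 1 := by
    ext i j
    simpa only [Matrix.mul_apply, Matrix.one_apply] using! hinv i j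
  have hright : Matrix.of (g x) * Matrix.of (ginv x) = 1 := mul_eq_one_comm.1 hleft
  let c : Fin n → ℝ := fun k =>
    pd (fun y => g y k j) l x + pd (fun y => g y k l) j x - pd (fun y => g y l j) k x
  have hΓ : (fun m => christoffel g ginv m l j x) = (1 / 2 : ℝ) • (Matrix.of (ginv x) *ᵥ c) := rfl
  calc ∑ m, g x k m * christoffel g ginv m l j x
      = (Matrix.of (g x) *ᵥ fun m => christoffel g ginv m l j x) k := rfl
    _ = (1 / 2) * c k := by
      rw [hΓ, Matrix.mulVec_smul, Matrix.mulVec_mulVec, hright, Matrix.one_mulVec]; rfl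

lemma pd_metric_eq_sum_christoffel (hsymm : ∀ x i j, g x i j = g x j i) {x : Fin n → ℝ}
    (hinv : ∀ i j, ∑ k, ginv x i k * g x k j = if i = j then (1 : ℝ) else 0) (l i j : Fin n) :
    pd (fun y => g y i j) l x =
      ∑ m, g x i m * christoffel g ginv m l j x + ∑ m, g x j m * christoffel g ginv m l i x := by
  rw [sum_metric_mul_christoffel hinv, sum_metric_mul_christoffel hinv]
  simp only [hsymm _ j i, hsymm _ l i, hsymm _ l j]
  ring

section AlongCurve

variable {x : ℝ → Fin n → ℝ} {v : Fin n → ℝ} {t : ℝ}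
  (hsymm : ∀ x i j, g x i j = g x j i)
  (hinv : ∀ i j, ∑ k, ginv (x t) i k * g (x t) k j = if i = j then (1 : ℝ) else 0)
  (hg : ∀ i j, DifferentiableAt ℝ (fun y => g y i j) (x t))

include hsymm hinv hg

lemma hasDerivAt_metric_comp (hx : HasDerivAt x v t) (i j : Fin n) :
    HasDerivAt (fun s => g (x s) i j)
      ((Matrix.of (g (x t)) * connectionMatrix g ginv (x t) v +
        (connectionMatrix g ginv (x t) v)ᵀ * Matrix.of (g (x t))) i j) t := by
  refine ((hg i j).hasFDerivAt.comp_hasDerivAt t hx).congr_deriv ?_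
  simp only [fderiv_apply_eq_sum_pd, pd_metric_eq_sum_christoffel hsymm hinv, Matrix.add_apply,
    Matrix.mul_apply, Matrix.transpose_apply, Matrix.of_apply, connectionMatrix, add_mul,
    Finset.sum_add_distrib, Finset.sum_mul, Finset.mul_sum, hsymm (x t) j]
  congr 1 <;> rw [Finset.sum_comm] <;>
    exact Finset.sum_congr rfl fun m _ => Finset.sum_congr rfl fun l _ => by ring

lemma hasDerivAt_metricForm {V W : ℝ → Fin n → ℝ} {V' W' : Fin n → ℝ}
    (hx : HasDerivAt x v t) (hV : HasDerivAt V V' t) (hW : HasDerivAt W W' t) :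
    HasDerivAt (fun s => metricForm g (x s) (V s) (W s))
      (metricForm g (x t) (V' + connectionMatrix g ginv (x t) v *ᵥ V t) (W t) +
        metricForm g (x t) (V t) (W' + connectionMatrix g ginv (x t) v *ᵥ W t)) t := by
  set G := Matrix.of (g (x t))
  set ω := connectionMatrix g ginv (x t) v
  have hsum := HasDerivAt.fun_sum fun i (_ : i ∈ Finset.univ) =>
    HasDerivAt.fun_sum fun j (_ : j ∈ Finset.univ) =>
      ((hasDerivAt_metric_comp hsymm hinv hg hx i j).fun_mul (hasDerivAt_pi.1 hV i)).fun_mul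
        (hasDerivAt_pi.1 hW j)
  refine hsum.congr_deriv ?_
  calc ∑ i, ∑ j, (((G * ω + ωᵀ * G) i j * V t i + G i j * V' i) * W t j + G i j * V t i * W' j)
      = V t ⬝ᵥ ((G * ω + ωᵀ * G) *ᵥ W t) + V' ⬝ᵥ (G *ᵥ W t) + V t ⬝ᵥ (G *ᵥ W') := by
        simp only [dotProduct, Matrix.mulVec, Finset.mul_sum, ← Finset.sum_add_distrib]
        exact Finset.sum_congr rfl fun i _ => Finset.sum_congr rfl fun j _ => by ring
    _ = (V' + ω *ᵥ V t) ⬝ᵥ (G *ᵥ W t) + V t ⬝ᵥ (G *ᵥ (W' + ω *ᵥ W t)) := by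
        simp only [Matrix.add_mulVec, Matrix.mulVec_add, ← Matrix.mulVec_mulVec, dotProduct_add,
          add_dotProduct, Matrix.dotProduct_transpose_mulVec]
        rw [dotProduct_comm (G *ᵥ W t)]
        ring
    _ = _ := by rw [metricForm_eq_dotProduct, metricForm_eq_dotProduct]

lemma hasDerivAt_gnorm {V : ℝ → Fin n → ℝ} {V' : Fin n → ℝ}
    (hx : HasDerivAt x v t) (hV : HasDerivAt V V' t)
    (hV0 : metricForm g (x t) (V t) (V t) ≠ 0) :
    HasDerivAt (fun s => gnorm g (x s) (V s))
      (metricForm g (x t) (V t) (V' + connectionMatrix g ginv (x t) v *ᵥ V t) /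
        gnorm g (x t) (V t)) t := by
  refine ((hasDerivAt_metricForm hsymm hinv hg hx hV hV).sqrt hV0).congr_deriv ?_
  rw [metricForm_comm (hsymm _) _ (V t), ← two_mul]
  exact mul_div_mul_left _ _ two_ne_zero

end AlongCurve

lemma hasLineDerivAt_gnorm {x u : Fin n → ℝ} (hsymm : ∀ i j, g x i j = g x j i)
    (hu : metricForm g x u u ≠ 0) (v : Fin n → ℝ) :
    HasLineDerivAt ℝ (gnorm g x) (metricForm g x u v / gnorm g x u) u v := by
  have hline (i : Fin n) : HasDerivAt (fun s : ℝ => (u + s • v) i) (v i) 0 := by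
    simpa using! ((hasDerivAt_id (0 : ℝ)).mul_const (v i)).const_add (u i)
  have hsum : HasDerivAt (fun s : ℝ => metricForm g x (u + s • v) (u + s • v))
      (2 * metricForm g x u v) 0 := by
    refine (HasDerivAt.fun_sum fun i _ => HasDerivAt.fun_sum fun j _ =>
      ((hline i).const_mul (g x i j)).fun_mul (hline j)).congr_deriv ?_
    simp only [zero_smul, add_zero, Finset.sum_add_distrib]
    rw [two_mul]
    exact congrArg (· + _) (metricForm_comm hsymm v u)
  refine (hsum.sqrt (by simpa using hu)).congr_deriv ?_
  simpa using! mul_div_mul_left _ _ two_ne_zero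

end LeviCivita

section FrenetMomenta

open scoped Matrix

variable {g ginv : (Fin 2 → ℝ) → Fin 2 → Fin 2 → ℝ}

/-- The Riemannian area form `√(det g(x))·ε_{ij}aⁱbʲ` on `ℝ²`; in terms of it the Frenet curvature
is `areaForm u w / ‖u‖³`. -/
def areaForm (g : (Fin 2 → ℝ) → Fin 2 → Fin 2 → ℝ) (x a b : Fin 2 → ℝ) : ℝ :=
  Real.sqrt (detg g x) * (a 0 * b 1 - a 1 * b 0)

lemma areaForm_swap (x a b : Fin 2 → ℝ) : areaForm g x a b = -areaForm g x b a := by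
  unfold areaForm
  ring

lemma areaForm_add_smul_left (x a b c : Fin 2 → ℝ) (s : ℝ) :
    areaForm g x (a + s • b) c = areaForm g x a c + s * areaForm g x b c := by
  simp only [areaForm, Pi.add_apply, Pi.smul_apply, smul_eq_mul]
  ring

lemma areaForm_add_smul_right (x a b c : Fin 2 → ℝ) (s : ℝ) :
    areaForm g x a (b + s • c) = areaForm g x a b + s * areaForm g x a c := by
  simp only [areaForm, Pi.add_apply, Pi.smul_apply, smul_eq_mul]
  ring

lemma areaForm_single_left (x b : Fin 2 → ℝ) (i : Fin 2) :
    areaForm g x (Pi.single i 1) b = Real.sqrt (detg g x) * epsRow i b := by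
  fin_cases i <;> simp [areaForm, epsRow]

-- A form alternating in three vectors of a plane vanishes.
lemma metricForm_mul_areaForm_cyclic (x a b c d : Fin 2 → ℝ) :
    metricForm g x a b * areaForm g x c d + metricForm g x a c * areaForm g x d b +
      metricForm g x a d * areaForm g x b c = 0 := by
  simp only [metricForm, areaForm, Fin.sum_univ_two]
  ring

lemma detg_pos {x : Fin 2 → ℝ} (hsymm : ∀ i j, g x i j = g x j i)
    (hpos : ∀ u : Fin 2 → ℝ, u ≠ 0 → 0 < metricForm g x u u) : 0 < detg g x := by
  have hposDef : (Matrix.of (g x)).PosDef := by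
    refine .of_dotProduct_mulVec_pos (.ext fun i j => hsymm j i) fun {u} hu => ?_
    simpa only [star_trivial, metricForm_eq_dotProduct] using hpos u hu
  simpa only [Matrix.det_fin_two] using! hposDef.det_pos

section AlongCurve

variable {x V W : ℝ → Fin 2 → ℝ} {v V' W' : Fin 2 → ℝ} {t : ℝ}
  (hsymm : ∀ x i j, g x i j = g x j i)
  (hinv : ∀ i j, ∑ k, ginv (x t) i k * g (x t) k j = if i = j then (1 : ℝ) else 0)
  (hg : ∀ i j, DifferentiableAt ℝ (fun y => g y i j) (x t))

include hsymm hinv hg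

lemma hasDerivAt_sqrt_detg (hdet : 0 < detg g (x t)) (hx : HasDerivAt x v t) :
    HasDerivAt (fun s => Real.sqrt (detg g (x s)))
      (Real.sqrt (detg g (x t)) * (connectionMatrix g ginv (x t) v).trace) t := by
  have hG := hasDerivAt_metric_comp hsymm hinv hg hx
  have hdetg : HasDerivAt (fun s => detg g (x s))
      (2 * (connectionMatrix g ginv (x t) v).trace * detg g (x t)) t := by
    refine (((hG 0 0).fun_mul (hG 1 1)).fun_sub ((hG 0 1).fun_mul (hG 1 0))).congr_deriv ?_
    simp only [Matrix.add_apply, Matrix.mul_apply, Matrix.transpose_apply, Matrix.of_apply,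
      Fin.sum_univ_two, Matrix.trace_fin_two, detg]
    ring
  refine (hdetg.sqrt hdet.ne').congr_deriv ?_
  rw [div_eq_iff (mul_pos two_pos (Real.sqrt_pos.2 hdet)).ne']
  linear_combination -2 * (connectionMatrix g ginv (x t) v).trace * Real.sq_sqrt hdet.le

lemma hasDerivAt_areaForm (hdet : 0 < detg g (x t))
    (hx : HasDerivAt x v t) (hV : HasDerivAt V V' t) (hW : HasDerivAt W W' t) :
    HasDerivAt (fun s => areaForm g (x s) (V s) (W s))
      (areaForm g (x t) (V' + connectionMatrix g ginv (x t) v *ᵥ V t) (W t) +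
        areaForm g (x t) (V t) (W' + connectionMatrix g ginv (x t) v *ᵥ W t)) t := by
  have hVi := hasDerivAt_pi.1 hV
  have hWi := hasDerivAt_pi.1 hW
  refine ((hasDerivAt_sqrt_detg hsymm hinv hg hdet hx).fun_mul
    (((hVi 0).fun_mul (hWi 1)).fun_sub ((hVi 1).fun_mul (hWi 0)))).congr_deriv ?_
  simp only [areaForm, Pi.add_apply, Matrix.mulVec, dotProduct, Fin.sum_univ_two,
    Matrix.trace_fin_two]
  ring

lemma covDeriv_areaForm_single (hdet : 0 < detg g (x t))
    (hx : DifferentiableAt ℝ x t) (hV : HasDerivAt V V' t) (i : Fin 2) :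
    covDeriv g ginv x (fun s j => areaForm g (x s) (V s) (Pi.single j 1)) t i =
      areaForm g (x t) (V' + connectionMatrix g ginv (x t) (deriv x t) *ᵥ V t)
        (Pi.single i 1) := by
  rw [covDeriv_eq_sub_vecMul, (hasDerivAt_areaForm hsymm hinv hg hdet hx.hasDerivAt hV
    (hasDerivAt_const t (Pi.single i 1))).deriv, zero_add, Matrix.mulVec_single_one]
  fin_cases i <;> simp [areaForm, Matrix.vecMul, dotProduct, Fin.sum_univ_two] <;> ring

lemma covDeriv_areaForm_div_gnorm_pow_three (hdet : 0 < detg g (x t)) (hx : DifferentiableAt ℝ x t)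
    (hV : HasDerivAt V V' t) (hV0 : 0 < metricForm g (x t) (V t) (V t)) (i : Fin 2) :
    covDeriv g ginv x
        (fun s j => areaForm g (x s) (V s) (Pi.single j 1) / gnorm g (x s) (V s) ^ 3) t i =
      areaForm g (x t) (V' + connectionMatrix g ginv (x t) (deriv x t) *ᵥ V t) (Pi.single i 1) /
          gnorm g (x t) (V t) ^ 3 -
        3 * areaForm g (x t) (V t) (Pi.single i 1) *
            metricForm g (x t) (V t) (V' + connectionMatrix g ginv (x t) (deriv x t) *ᵥ V t) /
          gnorm g (x t) (V t) ^ 5 := by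
  have hN : gnorm g (x t) (V t) ≠ 0 := (Real.sqrt_pos.2 hV0).ne'
  have hA := hasDerivAt_areaForm hsymm hinv hg hdet hx.hasDerivAt hV
    (hasDerivAt_const t (Pi.single i 1))
  have hN3 := (hasDerivAt_gnorm hsymm hinv hg hx.hasDerivAt hV hV0.ne').fun_pow 3
  rw [covDeriv_div hA.differentiableAt hN3 (pow_ne_zero 3 hN),
    covDeriv_areaForm_single hsymm hinv hg hdet hx hV]
  field_simp
  ring

end AlongCurve

section Differential

variable {x u : Fin 2 → ℝ}

lemma differentiableAt_frenetKCov (hg : ∀ i j, DifferentiableAt ℝ (fun y => g y i j) x)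
    (hdet : detg g x ≠ 0) (hu : 0 < metricForm g x u u) (w : Fin 2 → ℝ) :
    DifferentiableAt ℝ (frenetKCov g) (x, u, w) := by
  have (i j : Fin 2) : DifferentiableAt ℝ
      (fun q : (Fin 2 → ℝ) × (Fin 2 → ℝ) × (Fin 2 → ℝ) => g q.1 i j) (x, u, w) :=
    DifferentiableAt.comp (g := fun y => g y i j) (x, u, w) (hg i j) differentiableAt_fst
  have hsqrt : DifferentiableAt ℝ
      (fun q : (Fin 2 → ℝ) × (Fin 2 → ℝ) × (Fin 2 → ℝ) => Real.sqrt (detg g q.1)) (x, u, w) := by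
    refine DifferentiableAt.sqrt ?_ hdet
    unfold detg
    fun_prop
  have hgnorm : DifferentiableAt ℝ
      (fun q : (Fin 2 → ℝ) × (Fin 2 → ℝ) × (Fin 2 → ℝ) => gnorm g q.1 q.2.1) (x, u, w) := by
    refine DifferentiableAt.sqrt ?_ hu.ne'
    fun_prop
  have hN : gnorm g x u ^ 3 ≠ 0 := pow_ne_zero 3 (Real.sqrt_pos.2 hu).ne'
  unfold frenetKCov
  fun_prop (disch := assumption)

lemma hasLineDerivAt_frenetKCov_velocity (hsymm : ∀ i j, g x i j = g x j i)
    (hu : 0 < metricForm g x u u) (w v : Fin 2 → ℝ) :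
    HasLineDerivAt ℝ (frenetKCov g)
      (areaForm g x v w / gnorm g x u ^ 3 -
        3 * areaForm g x u w * metricForm g x u v / gnorm g x u ^ 5) (x, u, w) (0, v, 0) := by
  have hN : gnorm g x u ≠ 0 := (Real.sqrt_pos.2 hu).ne'
  have hA : HasDerivAt (fun s : ℝ => areaForm g x (u + s • v) w) (areaForm g x v w) 0 := by
    simpa [areaForm_add_smul_left] using
      ((hasDerivAt_id (0 : ℝ)).mul_const (areaForm g x v w)).const_add (areaForm g x u w)
  have hN3 := HasDerivAt.fun_pow (hasLineDerivAt_gnorm hsymm hu.ne' v) 3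
  have hquot := hA.fun_div hN3 (by simpa using hN)
  simp only [zero_smul, add_zero] at hquot
  simp only [HasLineDerivAt, Prod.smul_mk, Prod.mk_add_mk, smul_zero, add_zero]
  refine hquot.congr_deriv ?_
  field_simp
  ring

lemma hasLineDerivAt_frenetKCov_acceleration (u w v : Fin 2 → ℝ) :
    HasLineDerivAt ℝ (frenetKCov g) (areaForm g x u v / gnorm g x u ^ 3)
      (x, u, w) (0, 0, v) := by
  have hA : HasDerivAt (fun s : ℝ => areaForm g x u (w + s • v)) (areaForm g x u v) 0 := by
    simpa [areaForm_add_smul_right] using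
      ((hasDerivAt_id (0 : ℝ)).mul_const (areaForm g x u v)).const_add (areaForm g x u w)
  simp only [HasLineDerivAt, Prod.smul_mk, Prod.mk_add_mk, smul_zero, add_zero]
  exact hA.div_const (gnorm g x u ^ 3)

lemma fderiv_frenetKCov_velocity (hsymm : ∀ i j, g x i j = g x j i)
    (hg : ∀ i j, DifferentiableAt ℝ (fun y => g y i j) x) (hdet : detg g x ≠ 0)
    (hu : 0 < metricForm g x u u) (w v : Fin 2 → ℝ) :
    fderiv ℝ (frenetKCov g) (x, u, w) (0, v, 0) =
      areaForm g x v w / gnorm g x u ^ 3 -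
        3 * areaForm g x u w * metricForm g x u v / gnorm g x u ^ 5 := by
  rw [← (differentiableAt_frenetKCov hg hdet hu w).lineDeriv_eq_fderiv]
  exact (hasLineDerivAt_frenetKCov_velocity hsymm hu w v).lineDeriv

lemma fderiv_frenetKCov_acceleration (hg : ∀ i j, DifferentiableAt ℝ (fun y => g y i j) x)
    (hdet : detg g x ≠ 0) (hu : 0 < metricForm g x u u) (w v : Fin 2 → ℝ) :
    fderiv ℝ (frenetKCov g) (x, u, w) (0, 0, v) = areaForm g x u v / gnorm g x u ^ 3 := by
  rw [← (differentiableAt_frenetKCov hg hdet hu w).lineDeriv_eq_fderiv]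
  exact (hasLineDerivAt_frenetKCov_acceleration u w v).lineDeriv

lemma frenet_momentum_identity (hu : 0 < metricForm g x u u) (v w : Fin 2 → ℝ) :
    (areaForm g x v w / gnorm g x u ^ 3 -
        3 * areaForm g x u w * metricForm g x u v / gnorm g x u ^ 5) -
      (areaForm g x w v / gnorm g x u ^ 3 -
        3 * areaForm g x u v * metricForm g x u w / gnorm g x u ^ 5) =
      -areaForm g x v w / gnorm g x u ^ 3 := by
  have hN : gnorm g x u ≠ 0 := (Real.sqrt_pos.2 hu).ne'
  have hsq : gnorm g x u ^ 2 = metricForm g x u u := Real.sq_sqrt hu.le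
  have hcyc := metricForm_mul_areaForm_cyclic (g := g) x u u v w
  rw [← hsq, areaForm_swap x w u] at hcyc
  rw [areaForm_swap x w v]
  field_simp
  linear_combination 3 * hcyc

end Differential

end FrenetMomenta

theorem stmt_13_general (g ginv : (Fin 2 → ℝ) → Fin 2 → Fin 2 → ℝ)
    (hg : ∀ i j, Differentiable ℝ (fun x => g x i j))
    (hsymm : ∀ x i j, g x i j = g x j i)
    (hpos : ∀ (x u : Fin 2 → ℝ), u ≠ 0 → 0 < ∑ i, ∑ j, g x i j * u i * u j)
    (hinv : ∀ x i j, ∑ k, ginv x i k * g x k j = if i = j then (1 : ℝ) else 0) :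
    (∀ x u w : Fin 2 → ℝ, u ≠ 0 → ∀ i : Fin 2,
      fderiv ℝ (frenetKCov g) (x, u, w) (0, 0, Pi.single i 1)
        = -(Real.sqrt (detg g x) * epsRow i u) / gnorm g x u ^ 3) ∧
    (∀ (x : ℝ → Fin 2 → ℝ) (t : ℝ), deriv x t ≠ 0 → DifferentiableAt ℝ (deriv x) t →
      ∀ i : Fin 2,
        fderiv ℝ (frenetKCov g) (jet2Cov g ginv x t) (0, Pi.single i 1, 0)
          - covDeriv g ginv x
              (fun s j =>
                fderiv ℝ (frenetKCov g) (jet2Cov g ginv x s) (0, 0, Pi.single j 1))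
              t i
        = -(Real.sqrt (detg g (x t)) * epsRow i ((jet2Cov g ginv x t).2.2))
            / gnorm g (x t) (deriv x t) ^ 3) := by
  have hdet (x : Fin 2 → ℝ) : 0 < detg g x := detg_pos (hsymm x) (hpos x)
  have hacc {x u : Fin 2 → ℝ} (hu : u ≠ 0) (w v : Fin 2 → ℝ) :=
    fderiv_frenetKCov_acceleration (fun i j => hg i j x) (hdet x).ne' (hpos x u hu) w v
  refine ⟨fun x u w hu i => ?_, fun x t hx hx' i => ?_⟩
  · rw [hacc hu, areaForm_swap, areaForm_single_left]
  · have hmomentum : (fun s j =>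
          fderiv ℝ (frenetKCov g) (jet2Cov g ginv x s) (0, 0, Pi.single j 1)) =ᶠ[nhds t]
        fun s j => areaForm g (x s) (deriv x s) (Pi.single j 1) / gnorm g (x s) (deriv x s) ^ 3 :=
      (hx'.continuousAt.eventually_ne hx).mono fun s hs => funext fun j => hacc hs _ _
    have hupos := hpos (x t) (deriv x t) hx
    have hvel : fderiv ℝ (frenetKCov g) (jet2Cov g ginv x t) (0, Pi.single i 1, 0) = _ :=
      fderiv_frenetKCov_velocity (hsymm _) (fun i j => hg i j _) (hdet _).ne' hupos _ _
    rw [hvel, covDeriv_congr hmomentum, covDeriv_areaForm_div_gnorm_pow_three hsymm (hinv (x t))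
      (fun i j => hg i j (x t)) (hdet _) (differentiableAt_of_deriv_ne_zero hx)
      hx'.hasDerivAt hupos, ← covAccel_eq_add_mulVec, ← areaForm_single_left]
    exact frenet_momentum_identity hupos _ _

/-- for the signed Frenet curvature `k̃(x,u,w)` in covariant coordinates
on `(ℝ², g)`, the covariant momenta are `π⁽¹⁾ᵢ = ∂k̃/∂wⁱ = −√(det g)·ε_{ij}uʲ/‖u‖³`
pointwise, and along any smooth curve with nonvanishing velocity,
`πᵢ = ∂k̃/∂uⁱ − (π⁽¹⁾)'ᵢ = −√(det g)·ε_{ij}wʲ/‖u‖³`. -/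
theorem stmt_13 (g ginv : (Fin 2 → ℝ) → Fin 2 → Fin 2 → ℝ)
    (hg : ∀ i j, ContDiff ℝ (⊤ : ℕ∞) (fun x => g x i j))
    (hsymm : ∀ x i j, g x i j = g x j i)
    (hpos : ∀ (x u : Fin 2 → ℝ), u ≠ 0 → 0 < ∑ i, ∑ j, g x i j * u i * u j)
    (hinv : ∀ x i j, ∑ k, ginv x i k * g x k j = if i = j then (1 : ℝ) else 0) :
    (∀ x u w : Fin 2 → ℝ, u ≠ 0 → ∀ i : Fin 2,
      fderiv ℝ (frenetKCov g) (x, u, w) (0, 0, Pi.single i 1)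
        = -(Real.sqrt (detg g x) * epsRow i u) / gnorm g x u ^ 3) ∧
    (∀ x : ℝ → Fin 2 → ℝ, ContDiff ℝ (⊤ : ℕ∞) x → (∀ t : ℝ, deriv x t ≠ 0) →
      ∀ (t : ℝ) (i : Fin 2),
        fderiv ℝ (frenetKCov g) (jet2Cov g ginv x t) (0, Pi.single i 1, 0)
          - covDeriv g ginv x
              (fun s j =>
                fderiv ℝ (frenetKCov g) (jet2Cov g ginv x s) (0, 0, Pi.single j 1))
              t i
        = -(Real.sqrt (detg g (x t)) * epsRow i ((jet2Cov g ginv x t).2.2))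
            / gnorm g (x t) (deriv x t) ^ 3) := by
  have hgen := stmt_13_general g ginv (fun i j => (hg i j).differentiable (by simp)) hsymm hpos hinv
  exact ⟨hgen.1, fun x hx hu t =>
    hgen.2 x t (hu t) ((hx.of_le (by norm_cast)).differentiable_deriv_two t)⟩
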